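/- arXiv:1412.1332 — 2 statements merged into one kernel-verified Lean document; each statement's English description precedes it below -/
import Mathlib

section
/- Let d ≥ 1, let n : ℝ^d → ℝ be a C^∞ function with n(x) > 0 for every x, and let φ : ℝ^d → ℝ^d be a C^∞ compactly supported vector field. Then ∫_{ℝ^d} n ∇( Δ√n / √n ) · φ dx = ∫_{ℝ^d} √n ∇√n · ∇( div φ ) dx + 2 ∫_{ℝ^d} Σ_{i,j} ( ∂_i √n · ∂_j √n ) ∂_i φ_j dx. -/
open MeasureTheory

/-- The `i`-th partial derivative of `f : ℝ^d → ℝ`. -/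
noncomputable def pd {d : ℕ} (i : Fin d) (f : (Fin d → ℝ) → ℝ) (x : Fin d → ℝ) : ℝ :=
  fderiv ℝ f x (Pi.single i 1)

/-!
With `r = √n`, the quotient rule gives `n ∂ⱼ(Δr / r) = r ∂ⱼΔr - Δr ∂ⱼr`, in which no division is
left. Commuting partial derivatives, this is in divergence form,
`r ∂ⱼΔr - Δr ∂ⱼr = ∑ᵢ (∂ⱼ∂ᵢ(r ∂ᵢr) - 2 ∂ᵢ(∂ᵢr ∂ⱼr))`,
and integrating by parts twice in the first term and once in the second moves the outer derivatives
onto `φ`.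
-/

/-- The Laplacian `Δf` on `Fin d → ℝ`, as the sum of the pure second partial derivatives; this
domain has no inner product, so Mathlib's Laplacian does not apply to it. -/
noncomputable def laplacian {d : ℕ} (f : (Fin d → ℝ) → ℝ) (x : Fin d → ℝ) : ℝ :=
  ∑ j, pd j (pd j f) x

/-- The divergence `div φ` of a vector field on `Fin d → ℝ`. -/
noncomputable def divergence {d : ℕ} (φ : (Fin d → ℝ) → Fin d → ℝ) (x : Fin d → ℝ) : ℝ :=
  ∑ j, pd j (fun y => φ y j) x

section PartialDerivatives

variable {d : ℕ} {f g : (Fin d → ℝ) → ℝ} {x : Fin d → ℝ}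

theorem contDiff_pd {k m : WithTop ℕ∞} (i : Fin d) (hf : ContDiff ℝ m f) (hkm : k + 1 ≤ m) :
    ContDiff ℝ k (pd i f) :=
  (hf.fderiv_right hkm).clm_apply contDiff_const

theorem continuous_pd (i : Fin d) (hf : ContDiff ℝ 1 f) : Continuous (pd i f) :=
  (contDiff_pd (k := 0) i hf (by simp)).continuous

theorem differentiable_pd (i : Fin d) (hf : ContDiff ℝ 2 f) : Differentiable ℝ (pd i f) :=
  (contDiff_pd (k := 1) i hf (by norm_num)).differentiable one_ne_zero

theorem hasCompactSupport_pd (i : Fin d) (hf : HasCompactSupport f) :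
    HasCompactSupport (pd i f) :=
  hf.fderiv_apply (𝕜 := ℝ) _

theorem pd_add (i : Fin d) (hf : DifferentiableAt ℝ f x) (hg : DifferentiableAt ℝ g x) :
    pd i (fun y => f y + g y) x = pd i f x + pd i g x := by
  simp only [pd, fderiv_fun_add hf hg, add_apply]

theorem pd_mul (i : Fin d) (hf : DifferentiableAt ℝ f x) (hg : DifferentiableAt ℝ g x) :
    pd i (fun y => f y * g y) x = pd i f x * g x + f x * pd i g x := by
  simp only [pd, fderiv_fun_mul hf hg, add_apply, smul_apply, smul_eq_mul]
  ring

theorem pd_sum {ι : Type*} (i : Fin d) (s : Finset ι) {F : ι → (Fin d → ℝ) → ℝ}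
    (hF : ∀ j ∈ s, DifferentiableAt ℝ (F j) x) :
    pd i (fun y => ∑ j ∈ s, F j y) x = ∑ j ∈ s, pd i (F j) x := by
  simp only [pd, fderiv_fun_sum hF, sum_apply]

theorem sq_mul_pd_div (i : Fin d) (hf : DifferentiableAt ℝ f x) (hg : DifferentiableAt ℝ g x)
    (hx : g x ≠ 0) :
    g x ^ 2 * pd i (fun y => f y / g y) x = g x * pd i f x - f x * pd i g x := by
  have cancel : (fun y => g y * (f y / g y)) =ᶠ[nhds x] f :=
    (hg.continuousAt.eventually_ne hx).mono fun y hy => mul_div_cancel₀ (f y) hy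
  have hfg : DifferentiableAt ℝ (fun y => f y / g y) x := by
    simpa only [div_eq_mul_inv] using hf.fun_mul (hg.fun_inv hx)
  have product_rule :
      pd i f x = pd i g x * (f x / g x) + g x * pd i (fun y => f y / g y) x := by
    rw [← pd_mul i hg hfg, pd, pd, cancel.fderiv_eq]
  rw [product_rule]
  field_simp
  ring

theorem pd_comm (i j : Fin d) (hf : ContDiff ℝ 2 f) : pd i (pd j f) x = pd j (pd i f) x := by
  have hf' : DifferentiableAt ℝ (fderiv ℝ f) x :=
    (hf.fderiv_right (m := 1) (by norm_num)).differentiable one_ne_zero x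
  have pd_pd_eq (a b : Fin d) :
      pd a (pd b f) x = fderiv ℝ (fderiv ℝ f) x (Pi.single a 1) (Pi.single b 1) := by
    change fderiv ℝ (fun y => fderiv ℝ f y (Pi.single b 1)) x (Pi.single a 1) = _
    simp [fderiv_clm_apply hf' (differentiableAt_const _)]
  rw [pd_pd_eq, pd_pd_eq]
  exact hf.contDiffAt.isSymmSndFDerivAt (by simp) _ _

theorem contDiff_laplacian {k m : WithTop ℕ∞} (hf : ContDiff ℝ m f) (hkm : k + 1 + 1 ≤ m) :
    ContDiff ℝ k (laplacian f) :=
  ContDiff.sum fun j _ => contDiff_pd j (contDiff_pd j hf hkm) le_rfl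

theorem pd_laplacian (i : Fin d) (hf : ContDiff ℝ 3 f) :
    pd i (laplacian f) x = ∑ j, pd i (pd j (pd j f)) x :=
  pd_sum i _ fun j _ => differentiable_pd j (contDiff_pd j hf (by norm_num)) x

theorem sum_mul_pd_laplacian_sub_mul (hf : ContDiff ℝ 3 f) (v : Fin d → ℝ) :
    ∑ j, (f x * pd j (laplacian f) x - laplacian f x * pd j f x) * v j =
      ∑ i, ∑ j, (f x * pd j (pd i (pd i f)) x - pd i (pd i f) x * pd j f x) * v j := by
  rw [Finset.sum_comm]
  simp only [pd_laplacian _ hf, laplacian, Finset.mul_sum, Finset.sum_mul,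
    ← Finset.sum_sub_distrib]

theorem pd_divergence {φ : (Fin d → ℝ) → Fin d → ℝ} (i : Fin d) (hφ : ContDiff ℝ 2 φ) :
    pd i (divergence φ) x = ∑ j, pd i (pd j fun y => φ y j) x :=
  pd_sum i _ fun j _ => differentiable_pd j (contDiff_pi.1 hφ j) x

theorem mul_pd_pd_pd_sub_eq (i j : Fin d) (hf : ContDiff ℝ 3 f) :
    f x * pd j (pd i (pd i f)) x - pd i (pd i f) x * pd j f x =
      pd j (pd i fun y => f y * pd i f y) x - 2 * pd i (fun y => pd i f y * pd j f y) x := by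
  have df : Differentiable ℝ f := hf.differentiable three_ne_zero
  have hf2 : ContDiff ℝ 2 f := hf.of_le (by norm_num)
  have dpd (a : Fin d) : Differentiable ℝ (pd a f) := differentiable_pd a hf2
  have dpd_pd : Differentiable ℝ (pd i (pd i f)) :=
    differentiable_pd i (contDiff_pd i hf (by norm_num))
  have inner_pd : pd i (fun y => f y * pd i f y) =
      fun y => pd i f y * pd i f y + f y * pd i (pd i f) y :=
    funext fun y => pd_mul i (df y) (dpd i y)
  rw [inner_pd, pd_add j ((dpd i).fun_mul (dpd i) x) (df.fun_mul dpd_pd x),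
    pd_mul j (dpd i x) (dpd i x), pd_mul j (df x) (dpd_pd x), pd_mul i (dpd i x) (dpd j x),
    pd_comm i j hf2]
  ring

end PartialDerivatives

theorem integral_sum_sum {α ι κ E : Type*} [MeasurableSpace α] {μ : Measure α}
    [NormedAddCommGroup E] [NormedSpace ℝ E] (s : Finset ι) (t : Finset κ) {F : ι → κ → α → E}
    (hF : ∀ i ∈ s, ∀ j ∈ t, Integrable (F i j) μ) :
    ∫ x, ∑ i ∈ s, ∑ j ∈ t, F i j x ∂μ = ∑ i ∈ s, ∑ j ∈ t, ∫ x, F i j x ∂μ := by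
  rw [integral_finsetSum s fun i hi => integrable_finsetSum t (hF i hi)]
  exact Finset.sum_congr rfl fun i hi => integral_finsetSum t (hF i hi)

theorem integrable_mul_of_hasCompactSupport_right {X : Type*} [TopologicalSpace X]
    [MeasurableSpace X] [OpensMeasurableSpace X] {μ : Measure X} [IsFiniteMeasureOnCompacts μ]
    {R : Type*} [NormedRing R] {f g : X → R} (hf : Continuous f) (hg : Continuous g)
    (hgc : HasCompactSupport g) :
    Integrable (fun x => f x * g x) μ :=
  (hf.mul hg).integrable_of_hasCompactSupport hgc.mul_left

section IntegrationByParts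

variable {d : ℕ} {μ : Measure (Fin d → ℝ)} [μ.IsAddHaarMeasure] {f g : (Fin d → ℝ) → ℝ}

theorem integral_pd_mul_eq_neg (i : Fin d) (hf : ContDiff ℝ 1 f) (hg : ContDiff ℝ 1 g)
    (hgc : HasCompactSupport g) :
    ∫ x, pd i f x * g x ∂μ = -∫ x, f x * pd i g x ∂μ := by
  rw [← neg_eq_iff_eq_neg, eq_comm]
  exact integral_mul_fderiv_eq_neg_fderiv_mul_of_integrable
    (integrable_mul_of_hasCompactSupport_right (continuous_pd i hf) hg.continuous hgc)
    (integrable_mul_of_hasCompactSupport_right hf.continuous (continuous_pd i hg)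
      (hasCompactSupport_pd i hgc))
    (integrable_mul_of_hasCompactSupport_right hf.continuous hg.continuous hgc)
    (fun x _ => hf.differentiable one_ne_zero x) (fun x _ => hg.differentiable one_ne_zero x)

theorem integral_pd_pd_mul (i j : Fin d) (hf : ContDiff ℝ 2 f) (hg : ContDiff ℝ 2 g)
    (hgc : HasCompactSupport g) :
    ∫ x, pd j (pd i f) x * g x ∂μ = ∫ x, f x * pd i (pd j g) x ∂μ := by
  rw [integral_pd_mul_eq_neg j (contDiff_pd i hf (by norm_num)) (hg.of_le one_le_two) hgc,
    integral_pd_mul_eq_neg i (hf.of_le one_le_two) (contDiff_pd j hg (by norm_num))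
      (hasCompactSupport_pd j hgc), neg_neg]

theorem integral_mul_pd_pd_pd_sub_mul (i j : Fin d) (hf : ContDiff ℝ 3 f) (hg : ContDiff ℝ 2 g)
    (hgc : HasCompactSupport g) :
    ∫ x, (f x * pd j (pd i (pd i f)) x - pd i (pd i f) x * pd j f x) * g x ∂μ =
      (∫ x, f x * pd i f x * pd i (pd j g) x ∂μ) + 2 * ∫ x, pd i f x * pd j f x * pd i g x ∂μ := by
  have hpd (a : Fin d) : ContDiff ℝ 2 (pd a f) := contDiff_pd a hf (by norm_num)
  have h_flux : ContDiff ℝ 2 fun y => f y * pd i f y := (hf.of_le (by norm_num)).mul (hpd i)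
  have h_tensor : ContDiff ℝ 2 fun y => pd i f y * pd j f y := (hpd i).mul (hpd j)
  have int_flux : Integrable (fun x => pd j (pd i fun y => f y * pd i f y) x * g x) μ :=
    integrable_mul_of_hasCompactSupport_right
      (continuous_pd j (contDiff_pd i h_flux (by norm_num))) hg.continuous hgc
  have int_tensor : Integrable (fun x => pd i (fun y => pd i f y * pd j f y) x * g x) μ :=
    integrable_mul_of_hasCompactSupport_right
      (continuous_pd i (h_tensor.of_le one_le_two)) hg.continuous hgc
  simp only [mul_pd_pd_pd_sub_eq i j hf, sub_mul, mul_assoc (2 : ℝ)]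
  rw [integral_sub int_flux (int_tensor.const_mul 2), integral_const_mul,
    integral_pd_pd_mul i j h_flux hg hgc,
    integral_pd_mul_eq_neg i (h_tensor.of_le one_le_two) (hg.of_le one_le_two) hgc]
  ring

end IntegrationByParts

section WeakForm

variable {d : ℕ} {μ : Measure (Fin d → ℝ)} [μ.IsAddHaarMeasure] {φ : (Fin d → ℝ) → Fin d → ℝ}

theorem integral_sum_mul_pd_laplacian_sub_mul {r : (Fin d → ℝ) → ℝ} (hr : ContDiff ℝ 3 r)
    (hφ : ContDiff ℝ 2 φ) (hφc : HasCompactSupport φ) :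
    ∫ x, ∑ j, (r x * pd j (laplacian r) x - laplacian r x * pd j r x) * φ x j ∂μ =
      (∫ x, ∑ i, r x * pd i r x * pd i (divergence φ) x ∂μ) +
        2 * ∫ x, ∑ i, ∑ j, pd i r x * pd j r x * pd i (fun y => φ y j) x ∂μ := by
  have hφj (j : Fin d) : ContDiff ℝ 2 fun y => φ y j := contDiff_pi.1 hφ j
  have hφjc (j : Fin d) : HasCompactSupport fun y => φ y j :=
    hφc.comp_left (g := fun v : Fin d → ℝ => v j) rfl
  have hpd (i : Fin d) : ContDiff ℝ 2 (pd i r) := contDiff_pd i hr (by norm_num)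
  have hpd_pd (i : Fin d) : ContDiff ℝ 1 (pd i (pd i r)) := contDiff_pd i (hpd i) (by norm_num)
  simp only [sum_mul_pd_laplacian_sub_mul hr, pd_divergence _ hφ, Finset.mul_sum]
  rw [integral_sum_sum, integral_sum_sum, integral_sum_sum]
  · simp only [integral_mul_pd_pd_pd_sub_mul _ _ hr (hφj _) (hφjc _), Finset.sum_add_distrib,
      Finset.mul_sum]
  · exact fun i _ j _ => integrable_mul_of_hasCompactSupport_right
      ((hpd i).mul (hpd j)).continuous
      (continuous_pd i ((hφj j).of_le one_le_two)) (hasCompactSupport_pd i (hφjc j))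
  · exact fun i _ j _ => integrable_mul_of_hasCompactSupport_right
      (hr.continuous.mul (hpd i).continuous)
      (continuous_pd i (contDiff_pd j (hφj j) (by norm_num)))
      (hasCompactSupport_pd i (hasCompactSupport_pd j (hφjc j)))
  · exact fun i _ j _ => integrable_mul_of_hasCompactSupport_right
      ((hr.continuous.mul (continuous_pd j (hpd_pd i))).sub
        ((hpd_pd i).continuous.mul (hpd j).continuous))
      (hφj j).continuous (hφjc j)

theorem quantum_term_weak_form_general {n : (Fin d → ℝ) → ℝ} (hn : ContDiff ℝ 3 n)
    (hpos : ∀ x, 0 < n x) (hφ : ContDiff ℝ 2 φ) (hφc : HasCompactSupport φ) :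
    ∫ x, ∑ i, n x * pd i (fun y => laplacian (fun z => √(n z)) y / √(n y)) x * φ x i ∂μ =
      (∫ x, ∑ i, √(n x) * pd i (fun z => √(n z)) x * pd i (divergence φ) x ∂μ) +
        2 * ∫ x, ∑ i, ∑ j, pd i (fun z => √(n z)) x * pd j (fun z => √(n z)) x *
          pd i (fun y => φ y j) x ∂μ := by
  have hr : ContDiff ℝ 3 fun z => √(n z) := hn.sqrt fun x => (hpos x).ne'
  have quotient_rule (i : Fin d) (x : Fin d → ℝ) :
      n x * pd i (fun y => laplacian (fun z => √(n z)) y / √(n y)) x =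
        √(n x) * pd i (laplacian fun z => √(n z)) x -
          laplacian (fun z => √(n z)) x * pd i (fun z => √(n z)) x := by
    rw [← sq_mul_pd_div i
      ((contDiff_laplacian (k := 1) hr (by norm_num)).differentiable one_ne_zero x)
      (hr.differentiable three_ne_zero x) (Real.sqrt_pos.2 (hpos x)).ne', Real.sq_sqrt (hpos x).le]
  simp only [quotient_rule]
  exact integral_sum_mul_pd_laplacian_sub_mul hr hφ hφc

end WeakForm

/-- Weak form of the quantum term: for smooth positive `n` and a smooth compactly
supported vector field `φ`,
`∫ n ∇(Δ√n/√n) · φ = ∫ √n ∇√n · ∇(div φ) + 2 ∫ ∇√n ⊗ ∇√n : ∇φ`. -/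
theorem quantum_term_weak_form (d : ℕ) (hd : 1 ≤ d) (n : (Fin d → ℝ) → ℝ)
    (hn : ContDiff ℝ (⊤ : ℕ∞) n) (hpos : ∀ x, 0 < n x)
    (φ : (Fin d → ℝ) → Fin d → ℝ) (hφ : ContDiff ℝ (⊤ : ℕ∞) φ)
    (hφc : HasCompactSupport φ) :
    (∫ x : Fin d → ℝ, ∑ i : Fin d,
        n x * pd i (fun y =>
          (∑ j : Fin d, pd j (pd j (fun z => Real.sqrt (n z))) y) / Real.sqrt (n y)) x
          * φ x i)
      = (∫ x : Fin d → ℝ, ∑ i : Fin d,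
          Real.sqrt (n x) * pd i (fun z => Real.sqrt (n z)) x
            * pd i (fun y => ∑ j : Fin d, pd j (fun z => φ z j) y) x)
        + 2 * ∫ x : Fin d → ℝ, ∑ i : Fin d, ∑ j : Fin d,
            pd i (fun z => Real.sqrt (n z)) x * pd j (fun z => Real.sqrt (n z)) x
              * pd i (fun y => φ y j) x := by
  exact quantum_term_weak_form_general (hn.of_le ENat.LEInfty.out) hpos
    (hφ.of_le ENat.LEInfty.out) hφc
end

section
/- Let d ≥ 1, ν, ε > 0, γ > 1, and let p_c : ℝ → ℝ be a C¹ function. Let n : ℝ × ℝ^d → ℝ and u : ℝ × ℝ^d → ℝ^d be C^∞ with n(t,x) > 0 for all (t,x), satisfying pointwise the continuity equation ∂_t n + div(n u) = 0 and the quantum Navier–Stokes momentum equation ∂_t (n u_i) + Σ_j ∂_j (n u_j u_i) + ∂_i ( n^γ + p_c(n) ) − 2 ε² n ∂_i( Δ√n / √n ) = 2 ν Σ_j ∂_j ( n D(u)_{ij} ) for each i, where D(u)_{ij} = (∂_i u_j + ∂_j u_i)/2. Then the effective velocity w = u + ν ∇ log n satisfies, pointwise for each i: ∂_t (n w_i)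 + Σ_j ∂_j ( n u_j w_i ) + ∂_i ( n^γ + p_c(n) ) − 2 ε² n ∂_i( Δ√n / √n ) = ν Σ_j ∂_j ( n ∂_j u_i ). -/
/-- Time derivative of `f : ℝ × ℝ^d → ℝ`. -/
noncomputable def pdt {d : ℕ} (f : ℝ × (Fin d → ℝ) → ℝ) (p : ℝ × (Fin d → ℝ)) : ℝ :=
  fderiv ℝ f p (1, 0)

/-- The `i`-th spatial partial derivative of `f : ℝ × ℝ^d → ℝ`. -/
noncomputable def pdx {d : ℕ} (i : Fin d) (f : ℝ × (Fin d → ℝ) → ℝ)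
    (p : ℝ × (Fin d → ℝ)) : ℝ :=
  fderiv ℝ f p (0, Pi.single i 1)

/-!
The logarithm enters only through `n ∇ log n = ∇ n`, so that `n w = n u + ν ∇ n` and
`n u_j w = n u_j u + ν u_j ∇ n`. Differentiating the continuity equation in `x_i` gives a transport
equation for the gradient of the density,
`∂_t ∂_i n + ∑_j ∂_j (u_j ∂_i n) = -∑_j ∂_j (n ∂_i u_j)`.
Its right-hand side, multiplied by `ν`, cancels exactly the transposed half `∑_j ∂_j (n ∂_i u_j)` of
`2 ∑_j ∂_j (n D(u)_{ij})`. The pressure and quantum terms are carried along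
unchanged, as a single force `F`.
-/

/-- The derivative of `f` along the vector `v`. It covers both `pdt` and `pdx`, which are the cases
`v = (1, 0)` and `v = (0, Pi.single i 1)` by definition. -/
noncomputable def dirDeriv {E : Type*} [NormedAddCommGroup E] [NormedSpace ℝ E]
    (v : E) (f : E → ℝ) (p : E) : ℝ :=
  fderiv ℝ f p v

/-- The component along `v` of the effective velocity `u + ν ∇ log n`, where `a` is the component
of `u` along `v`. -/
noncomputable def effectiveVelocity {E : Type*} [NormedAddCommGroup E] [NormedSpace ℝ E]
    (ν : ℝ) (n a : E → ℝ) (v : E) (p : E) : ℝ :=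
  a p + ν * dirDeriv v (fun q => Real.log (n q)) p

section DirectionalDerivative

variable {E ι : Type*} [NormedAddCommGroup E] [NormedSpace ℝ E] {f g : E → ℝ} {p : E}

theorem dirDeriv_add (v : E) (hf : DifferentiableAt ℝ f p) (hg : DifferentiableAt ℝ g p) :
    dirDeriv v (fun q => f q + g q) p = dirDeriv v f p + dirDeriv v g p := by
  simp only [dirDeriv, fderiv_fun_add hf hg, add_apply]

theorem dirDeriv_const_mul (v : E) (c : ℝ) (hf : DifferentiableAt ℝ f p) :
    dirDeriv v (fun q => c * f q) p = c * dirDeriv v f p := by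
  simp only [dirDeriv, fderiv_const_mul hf, smul_apply, smul_eq_mul]

theorem dirDeriv_mul (v : E) (hf : DifferentiableAt ℝ f p) (hg : DifferentiableAt ℝ g p) :
    dirDeriv v (fun q => f q * g q) p = f p * dirDeriv v g p + g p * dirDeriv v f p := by
  simp only [dirDeriv, fderiv_fun_mul hf hg, add_apply, smul_apply, smul_eq_mul]

theorem dirDeriv_sum (v : E) {s : Finset ι} {F : ι → E → ℝ}
    (hF : ∀ j ∈ s, DifferentiableAt ℝ (F j) p) :
    dirDeriv v (fun q => ∑ j ∈ s, F j q) p = ∑ j ∈ s, dirDeriv v (F j) p := by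
  simp only [dirDeriv, fderiv_fun_sum hF, sum_apply]

theorem mul_dirDeriv_log (v : E) (hf : DifferentiableAt ℝ f p) (hp : f p ≠ 0) :
    f p * dirDeriv v (fun q => Real.log (f q)) p = dirDeriv v f p := by
  simp only [dirDeriv, fderiv.log hf hp, smul_apply, smul_eq_mul, mul_inv_cancel_left₀ hp]

theorem differentiable_dirDeriv (v : E) (hf : ContDiff ℝ 2 f) :
    Differentiable ℝ (dirDeriv v f) :=
  ((hf.fderiv_right (m := 1) le_rfl).clm_apply contDiff_const).differentiable one_ne_zero

theorem dirDeriv_comm (v w : E) (hf : ContDiffAt ℝ 2 f p) :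
    dirDeriv v (dirDeriv w f) p = dirDeriv w (dirDeriv v f) p := by
  have hdf : DifferentiableAt ℝ (fderiv ℝ f) p :=
    (hf.fderiv_right (m := 1) le_rfl).differentiableAt one_ne_zero
  have dirDeriv_dirDeriv (x y : E) :
      dirDeriv x (dirDeriv y f) p = fderiv ℝ (fderiv ℝ f) p x y := by
    change fderiv ℝ (fun q => fderiv ℝ f q y) p x = _
    simp [fderiv_clm_apply hdf (differentiableAt_const y)]
  rw [dirDeriv_dirDeriv, dirDeriv_dirDeriv]
  exact hf.isSymmSndFDerivAt (by simp) v w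

theorem dirDeriv_dirDeriv_mul (v w : E) (hf : ContDiff ℝ 2 f) (hg : ContDiff ℝ 2 g) :
    dirDeriv v (dirDeriv w (fun q => f q * g q)) p =
      dirDeriv w (fun q => f q * dirDeriv v g q) p +
        dirDeriv w (fun q => g q * dirDeriv v f q) p := by
  have hf' := hf.differentiable two_ne_zero
  have hg' := hg.differentiable two_ne_zero
  have product_rule : dirDeriv v (fun q => f q * g q) =
      fun q => f q * dirDeriv v g q + g q * dirDeriv v f q :=
    funext fun q => dirDeriv_mul v (hf' q) (hg' q)
  rw [dirDeriv_comm v w (hf.mul hg).contDiffAt, product_rule]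
  exact dirDeriv_add w ((hf' p).mul (differentiable_dirDeriv v hg p))
    ((hg' p).mul (differentiable_dirDeriv v hf p))

end DirectionalDerivative

section EffectiveVelocity

variable {E ι : Type*} [NormedAddCommGroup E] [NormedSpace ℝ E] [Fintype ι]
  {n a b : E → ℝ} {u : E → ι → ℝ} {τ p : E} {e : ι → E}

theorem mul_effectiveVelocity (ν : ℝ) (v : E) (hn : DifferentiableAt ℝ n p) (hp : n p ≠ 0) :
    n p * effectiveVelocity ν n a v p = n p * a p + ν * dirDeriv v n p := by
  rw [effectiveVelocity, ← mul_dirDeriv_log v hn hp]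
  ring

theorem dirDeriv_mul_mul_effectiveVelocity (ν : ℝ) (v w : E) (hn : ContDiff ℝ 2 n)
    (hne : ∀ q, n q ≠ 0) (ha : DifferentiableAt ℝ a p) (hb : DifferentiableAt ℝ b p) :
    dirDeriv w (fun q => n q * b q * effectiveVelocity ν n a v q) p =
      dirDeriv w (fun q => n q * b q * a q) p +
        ν * dirDeriv w (fun q => b q * dirDeriv v n q) p := by
  have hn' := hn.differentiable two_ne_zero
  have hbn := hb.fun_mul (differentiable_dirDeriv v hn p)
  have flux_eq : (fun q => n q * b q * effectiveVelocity ν n a v q) =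
      fun q => n q * b q * a q + ν * (b q * dirDeriv v n q) := by
    funext q
    linear_combination b q * mul_effectiveVelocity (a := a) ν v (hn' q) (hne q)
  rw [flux_eq, dirDeriv_add w (((hn' p).fun_mul hb).fun_mul ha) (hbn.const_mul ν),
    dirDeriv_const_mul w ν hbn]

theorem dirDeriv_mul_effectiveVelocity (ν : ℝ) (v w : E) (hn : ContDiff ℝ 2 n)
    (hne : ∀ q, n q ≠ 0) (ha : DifferentiableAt ℝ a p) :
    dirDeriv w (fun q => n q * effectiveVelocity ν n a v q) p =
      dirDeriv w (fun q => n q * a q) p + ν * dirDeriv w (dirDeriv v n) p := by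
  simpa only [mul_one, one_mul] using
    dirDeriv_mul_mul_effectiveVelocity ν v w hn hne ha (differentiableAt_const 1)

theorem density_gradient_transport (v : E) (hn : ContDiff ℝ 2 n) (hu : ContDiff ℝ 2 u)
    (hcont : ∀ q, dirDeriv τ n q + ∑ j, dirDeriv (e j) (fun r => n r * u r j) q = 0) :
    dirDeriv τ (dirDeriv v n) p + ∑ j, dirDeriv (e j) (fun q => u q j * dirDeriv v n q) p =
      -∑ j, dirDeriv (e j) (fun q => n q * dirDeriv v (fun r => u r j) q) p := by
  have huj := contDiff_pi.1 hu
  have hflux (j : ι) : DifferentiableAt ℝ (dirDeriv (e j) fun r => n r * u r j) p :=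
    differentiable_dirDeriv (e j) (hn.mul (huj j)) p
  have time_derivative : dirDeriv τ n =
      fun q => -1 * ∑ j, dirDeriv (e j) (fun r => n r * u r j) q :=
    funext fun q => by linear_combination hcont q
  rw [dirDeriv_comm τ v hn.contDiffAt, time_derivative,
    dirDeriv_const_mul v (-1) (DifferentiableAt.fun_sum fun j _ => hflux j),
    dirDeriv_sum v fun j _ => hflux j]
  simp only [dirDeriv_dirDeriv_mul v _ hn (huj _), Finset.sum_add_distrib]
  ring

theorem effectiveVelocity_inertia (ν : ℝ) (v : E) (hn : ContDiff ℝ 2 n) (hu : ContDiff ℝ 2 u)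
    (hne : ∀ q, n q ≠ 0) (ha : DifferentiableAt ℝ a p)
    (hcont : ∀ q, dirDeriv τ n q + ∑ j, dirDeriv (e j) (fun r => n r * u r j) q = 0) :
    dirDeriv τ (fun q => n q * effectiveVelocity ν n a v q) p +
        ∑ j, dirDeriv (e j) (fun q => n q * u q j * effectiveVelocity ν n a v q) p =
      dirDeriv τ (fun q => n q * a q) p + ∑ j, dirDeriv (e j) (fun q => n q * u q j * a q) p -
        ν * ∑ j, dirDeriv (e j) (fun q => n q * dirDeriv v (fun r => u r j) q) p := by
  have huj (j : ι) := (contDiff_pi.1 hu j).differentiable two_ne_zero p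
  simp only [dirDeriv_mul_effectiveVelocity ν v τ hn hne ha,
    dirDeriv_mul_mul_effectiveVelocity ν v _ hn hne ha (huj _),
    Finset.sum_add_distrib, ← Finset.mul_sum]
  linear_combination ν * density_gradient_transport v hn hu hcont

theorem two_mul_sum_dirDeriv_mul_symm_gradient (v : E) (hn : DifferentiableAt ℝ n p)
    (hu : ContDiff ℝ 2 u) (ha : ContDiff ℝ 2 a) :
    2 * ∑ j, dirDeriv (e j)
        (fun q => n q * ((dirDeriv v (fun r => u r j) q + dirDeriv (e j) a q) / 2)) p =
      ∑ j, dirDeriv (e j) (fun q => n q * dirDeriv v (fun r => u r j) q) p +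
        ∑ j, dirDeriv (e j) (fun q => n q * dirDeriv (e j) a q) p := by
  rw [Finset.mul_sum, ← Finset.sum_add_distrib]
  refine Finset.sum_congr rfl fun j _ => ?_
  have hnu := hn.fun_mul (differentiable_dirDeriv v (contDiff_pi.1 hu j) p)
  have hna := hn.fun_mul (differentiable_dirDeriv (e j) ha p)
  have stress_eq :
      (fun q => n q * ((dirDeriv v (fun r => u r j) q + dirDeriv (e j) a q) / 2)) =
        fun q => 2⁻¹ * (n q * dirDeriv v (fun r => u r j) q + n q * dirDeriv (e j) a q) :=
    funext fun q => by ring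
  rw [stress_eq, dirDeriv_const_mul (e j) _ (hnu.fun_add hna), dirDeriv_add (e j) hnu hna,
    mul_inv_cancel_left₀ two_ne_zero]

theorem effective_velocity_momentum_general {ν F : ℝ} {i : ι}
    (hn : ContDiff ℝ 2 n) (hu : ContDiff ℝ 2 u) (hne : ∀ q, n q ≠ 0)
    (hcont : ∀ q, dirDeriv τ n q + ∑ j, dirDeriv (e j) (fun r => n r * u r j) q = 0)
    (hmom : dirDeriv τ (fun q => n q * u q i) p +
        ∑ j, dirDeriv (e j) (fun q => n q * u q j * u q i) p + F =
      2 * ν * ∑ j, dirDeriv (e j) (fun q => n q *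
        ((dirDeriv (e i) (fun r => u r j) q + dirDeriv (e j) (fun r => u r i) q) / 2)) p) :
    dirDeriv τ (fun q => n q * effectiveVelocity ν n (fun r => u r i) (e i) q) p +
        ∑ j, dirDeriv (e j)
          (fun q => n q * u q j * effectiveVelocity ν n (fun r => u r i) (e i) q) p + F =
      ν * ∑ j, dirDeriv (e j) (fun q => n q * dirDeriv (e j) (fun r => u r i) q) p := by
  have hui := contDiff_pi.1 hu i
  have inertia := effectiveVelocity_inertia ν (e i) hn hu hne
    (hui.differentiable two_ne_zero p) hcont
  have viscosity := two_mul_sum_dirDeriv_mul_symm_gradient (e := e) (e i)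
    (hn.differentiable two_ne_zero p) hu hui
  linear_combination inertia + hmom + ν * viscosity

end EffectiveVelocity

/-- The momentum equation for the effective velocity `w = u + ν ∇ log n`: if `(n, u)` is a
smooth positive solution of the quantum Navier–Stokes system, then
`∂_t(n w) + div(n u ⊗ w) + ∇(n^γ + p_c(n)) − 2ε² n ∇(Δ√n/√n) = ν div(n ∇u)` pointwise. -/
theorem effective_velocity_momentum (d : ℕ) (hd : 1 ≤ d) (ν ε γ : ℝ)
    (hν : 0 < ν) (hε : 0 < ε) (hγ : 1 < γ)
    (p_c : ℝ → ℝ) (hpc : ContDiff ℝ 1 p_c)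
    (n : ℝ × (Fin d → ℝ) → ℝ) (u : ℝ × (Fin d → ℝ) → Fin d → ℝ)
    (hn : ContDiff ℝ (⊤ : ℕ∞) n) (hu : ContDiff ℝ (⊤ : ℕ∞) u)
    (hpos : ∀ p, 0 < n p)
    (hcont : ∀ p, pdt n p + ∑ j : Fin d, pdx j (fun q => n q * u q j) p = 0)
    (hmom : ∀ (p : ℝ × (Fin d → ℝ)) (i : Fin d),
      pdt (fun q => n q * u q i) p
        + (∑ j : Fin d, pdx j (fun q => n q * u q j * u q i) p)
        + pdx i (fun q => n q ^ γ + p_c (n q)) p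
        - 2 * ε ^ 2 * n p *
            pdx i (fun q =>
              (∑ j : Fin d, pdx j (pdx j (fun r => Real.sqrt (n r))) q)
                / Real.sqrt (n q)) p
        = 2 * ν * ∑ j : Fin d,
            pdx j (fun q => n q *
              ((pdx i (fun r => u r j) q + pdx j (fun r => u r i) q) / 2)) p) :
    ∀ (p : ℝ × (Fin d → ℝ)) (i : Fin d),
      pdt (fun q => n q * (u q i + ν * pdx i (fun r => Real.log (n r)) q)) p
        + (∑ j : Fin d,
            pdx j (fun q =>
              n q * u q j * (u q i + ν * pdx i (fun r => Real.log (n r)) q)) p)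
        + pdx i (fun q => n q ^ γ + p_c (n q)) p
        - 2 * ε ^ 2 * n p *
            pdx i (fun q =>
              (∑ j : Fin d, pdx j (pdx j (fun r => Real.sqrt (n r))) q)
                / Real.sqrt (n q)) p
        = ν * ∑ j : Fin d, pdx j (fun q => n q * pdx j (fun r => u r i) q) p :=
  fun p i => (add_sub_assoc _ _ _).trans <|
    effective_velocity_momentum_general (τ := (1, 0)) (e := fun j => (0, Pi.single j 1))
      (contDiff_infty.1 hn 2) (contDiff_infty.1 hu 2) (fun q => (hpos q).ne') hcont
      ((add_sub_assoc _ _ _).symm.trans (hmom p i))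
end
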